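/- Let ω = ω(n) be any function of n with ω(n) → ∞ as n→∞. Then with high probability there is no chord c of the random oriented chord diagram D_n with length ℓ(c) ≥ ω(n) whose strong component in the directed intersection graph of D_n consists of c alone (i.e., no other chord d satisfies that c and d are mutually reachable by directed paths). -/

import Mathlib

open scoped Classical
open Finset Filter

/-- A chord diagram of size `n`: a fixed-point-free involution of the `2n`
endpoints `0, 1, …, 2n-1` (endpoint `i` here corresponds to the label `i+1`). -/
abbrev ChordDiagram (n : ℕ) :=
  {f : Fin (2*n) → Fin (2*n) // (∀ i, f (f i) = i) ∧ ∀ i, f i ≠ i}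

/-- `c` lies strictly between `a` and `b`. -/
def Between {m : ℕ} (a b c : Fin m) : Prop := min a b < c ∧ c < max a b

/-- The chord of `C` containing endpoint `x` crosses the chord containing endpoint `u`:
exactly one of the two endpoints `u`, `C u` lies strictly between `x` and `C x`. -/
def Crosses {n : ℕ} (C : ChordDiagram n) (x u : Fin (2*n)) : Prop :=
  Xor' (Between x (C.1 x) u) (Between x (C.1 x) (C.1 u))

/-- Uniform probability of an event over all chord diagrams of size `n`. -/
noncomputable def prob (n : ℕ) (E : ChordDiagram n → Prop) : ℝ :=
  ((Finset.univ.filter E).card : ℝ) / ((Finset.univ : Finset (ChordDiagram n)).card : ℝ)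

/-- The degree of the chord of `C` containing endpoint `x`: the number of chords
crossing it (each chord counted once via its smaller endpoint). -/
noncomputable def chordDegree {n : ℕ} (C : ChordDiagram n) (x : Fin (2*n)) : ℕ :=
  (Finset.univ.filter fun u => u < C.1 u ∧ Crosses C x u).card

/-- The length of the chord of `C` containing endpoint `x`: the number of endpoints
on the smaller of the two arcs it determines. -/
def chordLength {n : ℕ} (C : ChordDiagram n) (x : Fin (2*n)) : ℕ :=
  min (max (x:ℕ) (C.1 x : ℕ) - min (x:ℕ) (C.1 x : ℕ) - 1)
      (2*n - (max (x:ℕ) (C.1 x : ℕ) - min (x:ℕ) (C.1 x : ℕ)) - 1)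

/-- Degree of the chord containing endpoint `1` (index `0`). -/
noncomputable def degreeC1 (n : ℕ) (C : ChordDiagram n) : ℕ :=
  if h : 0 < n then chordDegree C ⟨0, by omega⟩ else 0

/-- Length of the chord containing endpoint `1` (index `0`). -/
noncomputable def lengthC1 (n : ℕ) (C : ChordDiagram n) : ℕ :=
  if h : 0 < n then chordLength C ⟨0, by omega⟩ else 0

/-- Membership in the component (w.r.t. the crossing relation) of the chord
containing the root endpoint. -/
def InRootComponent {n : ℕ} (C : ChordDiagram n) (root x : Fin (2*n)) : Prop :=
  x = root ∨ x = C.1 root ∨ Relation.ReflTransGen (fun a b => Crosses C a b) root x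

/-- The chord containing `x` is simple: it joins two (cyclically) consecutive endpoints. -/
def IsSimple {n : ℕ} (C : ChordDiagram n) (x : Fin (2*n)) : Prop :=
  (C.1 x : ℕ) = ((x : ℕ) + 1) % (2*n) ∨ (x : ℕ) = ((C.1 x : ℕ) + 1) % (2*n)

/-- `C` is monolithic (with respect to `root`): every chord not in the root
component is simple, and no two simple chords are next to each other. -/
def Monolithic {n : ℕ} (C : ChordDiagram n) (root : Fin (2*n)) : Prop :=
  (∀ x : Fin (2*n), ¬ InRootComponent C root x → IsSimple C x) ∧
  ¬ ∃ i : Fin (2*n), (C.1 i : ℕ) = ((i : ℕ) + 1) % (2*n) ∧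
      ∃ j : Fin (2*n), (j : ℕ) = ((i : ℕ) + 2) % (2*n) ∧ (C.1 j : ℕ) = ((i : ℕ) + 3) % (2*n)

/-- `L_j`: the number of chords of length `j` in `C`. -/
noncomputable def lengthCount (n : ℕ) (j : ℕ) (C : ChordDiagram n) : ℕ :=
  (Finset.univ.filter fun x : Fin (2*n) => x < C.1 x ∧ chordLength C x = j).card

/-- The endpoints of chords of `C` of length at least `k`. -/
noncomputable def lenAtLeast (n k : ℕ) (C : ChordDiagram n) : Finset (Fin (2*n)) :=
  Finset.univ.filter fun x => k ≤ chordLength C x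

/-- The number of chords with endpoints in `S` crossing the chord containing `x`. -/
noncomputable def degreeIn {n : ℕ} (C : ChordDiagram n) (S : Finset (Fin (2*n)))
    (x : Fin (2*n)) : ℕ :=
  (S.filter fun u => u < C.1 u ∧ Crosses C x u).card

/-- `S` (a chord-closed set of endpoints) is a set of chords each crossing at
least `k` other chords of `S`. -/
def IsCore {n : ℕ} (C : ChordDiagram n) (k : ℕ) (S : Finset (Fin (2*n))) : Prop :=
  (∀ x ∈ S, C.1 x ∈ S) ∧ ∀ x ∈ S, k ≤ degreeIn C S x

/-- The `k`-core: the union of all sets of chords in which every chord crosses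
at least `k` other chords of the set. -/
noncomputable def kCore (n k : ℕ) (C : ChordDiagram n) : Finset (Fin (2*n)) :=
  Finset.univ.filter fun x => ∃ S : Finset (Fin (2*n)), IsCore C k S ∧ x ∈ S

/-- The number of chords in the `k`-core of `C`. -/
noncomputable def kCoreSize (n k : ℕ) (C : ChordDiagram n) : ℕ :=
  ((kCore n k C).filter fun x => x < C.1 x).card

/-- `Z_k`: the number of chords of length strictly less than `k`. -/
noncomputable def shortCount (n k : ℕ) (C : ChordDiagram n) : ℕ :=
  (Finset.univ.filter fun x : Fin (2*n) => x < C.1 x ∧ chordLength C x < k).card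

/-- `C` contains a balanced clique of size `m`: a set of `m` pairwise crossing
chords with exactly one endpoint in each of the `2m` blocks of length `⌊n/m⌋`. -/
def HasBalancedClique (n m : ℕ) (C : ChordDiagram n) : Prop :=
  ∃ S : Finset (Fin (2*n)),
    (∀ x ∈ S, C.1 x ∈ S) ∧
    (∀ x ∈ S, ∀ u ∈ S, u ≠ x → u ≠ C.1 x → Crosses C x u) ∧
    (∀ t : ℕ, 1 ≤ t → t ≤ 2*m →
      (S.filter fun x => (t-1) * (n/m) ≤ (x:ℕ) ∧ (x:ℕ) < t * (n/m)).card = 1)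

/-- An oriented chord diagram: a chord diagram together with auxiliary fair-coin
bits; the bit attached to a crossing pair of chords (indexed by their smaller
endpoints) decides which chord over-crosses the other. -/
abbrev OrientedChordDiagram (n : ℕ) := ChordDiagram n × (Fin (2*n) → Fin (2*n) → Bool)

/-- The smaller endpoint of the chord of `C` containing `x`. -/
def chordRep {n : ℕ} (C : ChordDiagram n) (x : Fin (2*n)) : Fin (2*n) := min x (C.1 x)

/-- In the oriented diagram `D`, the chord containing `x` crosses and
over-crosses the chord containing `u`. -/
def OverD {n : ℕ} (D : OrientedChordDiagram n) (x u : Fin (2*n)) : Prop :=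
  Crosses D.1 x u ∧
    ((chordRep D.1 x ≤ chordRep D.1 u ∧ D.2 (chordRep D.1 x) (chordRep D.1 u) = true) ∨
     (chordRep D.1 u < chordRep D.1 x ∧ D.2 (chordRep D.1 u) (chordRep D.1 x) = false))

/-- Uniform probability of an event over all oriented chord diagrams of size `n`
(this yields a uniformly random diagram with each crossing oriented by an
independent fair coin). -/
noncomputable def probD (n : ℕ) (E : OrientedChordDiagram n → Prop) : ℝ :=
  ((Finset.univ.filter E).card : ℝ) /
    ((Finset.univ : Finset (OrientedChordDiagram n)).card : ℝ)

/-- The chords (given by their endpoints in `S`) are strongly connected in the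
directed intersection graph of `D`, using only chords of `S`. -/
def StronglyConnectedIn {n : ℕ} (D : OrientedChordDiagram n) (S : Set (Fin (2*n))) : Prop :=
  ∀ c ∈ S, ∀ d ∈ S,
    Relation.ReflTransGen (fun a b => a ∈ S ∧ b ∈ S ∧ OverD D a b) c d

/-- The number of chords with both endpoints in the cyclic block
`{i, i+1, …, i+t-1}` (mod `2n`). -/
noncomputable def chordsInBlock (n : ℕ) (C : ChordDiagram n) (i t : ℕ) : ℕ :=
  (Finset.univ.filter fun x : Fin (2*n) => x < C.1 x ∧
    (∃ a < t, (x:ℕ) = (i + a) % (2*n)) ∧ (∃ a < t, ((C.1 x : ℕ)) = (i + a) % (2*n))).card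

/-- The chord of `x` reaches the chord of `u` in the directed intersection graph
(of the whole diagram); endpoints of the same chord represent the same vertex. -/
def ReachChord {n : ℕ} (D : OrientedChordDiagram n) (x u : Fin (2*n)) : Prop :=
  u = x ∨ u = D.1.1 x ∨ Relation.ReflTransGen (fun a b => OverD D a b) x u

/-- The chords of `x` and `u` lie in the same strong component. -/
def MutualReach {n : ℕ} (D : OrientedChordDiagram n) (x u : Fin (2*n)) : Prop :=
  ReachChord D x u ∧ ReachChord D u x

/-- The number of single-chord strong components of `D`. -/
noncomputable def singleCount (n : ℕ) (D : OrientedChordDiagram n) : ℕ :=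
  (Finset.univ.filter fun x : Fin (2*n) =>
    x < D.1.1 x ∧ ∀ u : Fin (2*n), u ≠ x → u ≠ D.1.1 x → ¬ MutualReach D x u).card

section Matchings
set_option linter.unusedSectionVars false
variable {V : Type*} [Fintype V] [DecidableEq V]

/-- Perfect matchings of `S`, as involutions with support exactly `S`. -/
noncomputable def Mt (S : Finset V) : Finset (Equiv.Perm V) :=
  univ.filter (fun f => (∀ v, f (f v) = v) ∧ ∀ v, f v ≠ v ↔ v ∈ S)

lemma mem_Mt {S : Finset V} {f : Equiv.Perm V} :
    f ∈ Mt S ↔ (∀ v, f (f v) = v) ∧ ∀ v, f v ≠ v ↔ v ∈ S := by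
  simp [Mt]

lemma Mt_step_fwd {S : Finset V} {s t : V} (hs : s ∈ S) {f : Equiv.Perm V} (hf : f ∈ Mt S)
    (hst : f s = t) : t ∈ S.erase s ∧ Equiv.swap s t * f ∈ Mt ((S.erase s).erase t) := by
  rw [mem_Mt] at hf
  obtain ⟨h1, h2⟩ := hf
  have hne : f s ≠ s := (h2 s).2 hs
  have hts : f t = s := by rw [← hst, h1]
  have htS : t ∈ S := by rw [← h2, hts, ← hst]; exact hne.symm
  have hne' : t ≠ s := hst ▸ hne
  have key : ∀ v, (Equiv.swap s t * f) v = if v = s ∨ v = t then v else f v := by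
    intro v
    rw [Equiv.Perm.mul_apply]
    split_ifs with h
    · rcases h with rfl | rfl
      · rw [hst]; simp
      · rw [hts]; simp
    · push Not at h
      apply Equiv.swap_apply_of_ne_of_ne
      · intro e; apply h.2; rw [← hst, ← e, h1]
      · intro e; apply h.1; rw [← h1 v, e, hts]
  refine ⟨by simp [hne', htS], ?_⟩
  rw [mem_Mt]
  constructor
  · intro v
    rw [key v]
    split_ifs with h
    · rw [key v, if_pos h]
    · rw [key, if_neg, h1]
      push Not at h ⊢
      constructor
      · intro e; apply h.2; rw [← hst, ← e, h1]
      · intro e; apply h.1; rw [← h1 v, e, hts]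
  · intro v
    rw [key v]
    split_ifs with h
    · simp only [ne_eq, not_true_eq_false, mem_erase, false_iff]; tauto
    · rw [h2]; simp only [mem_erase]; tauto

lemma Mt_step_bwd {S : Finset V} {s t : V} (hs : s ∈ S) (ht : t ∈ S.erase s) {g : Equiv.Perm V}
    (hg : g ∈ Mt ((S.erase s).erase t)) :
    Equiv.swap s t * g ∈ Mt S ∧ (Equiv.swap s t * g) s = t ∧
      ∀ v, v ≠ s → v ≠ t → (Equiv.swap s t * g) v = g v := by
  rw [mem_Mt] at hg
  obtain ⟨h1, h2⟩ := hg
  rw [mem_erase] at ht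
  have hgs : g s = s := by
    by_contra h; have := (h2 s).1 h; simp at this
  have hgt : g t = t := by
    by_contra h; have := (h2 t).1 h; simp at this
  have key : ∀ v, v ≠ s → v ≠ t → (Equiv.swap s t * g) v = g v := by
    intro v hv hv'
    rw [Equiv.Perm.mul_apply]
    apply Equiv.swap_apply_of_ne_of_ne
    · intro e; apply hv; rw [← h1 v, e, hgs]
    · intro e; apply hv'; rw [← h1 v, e, hgt]
  have ks : (Equiv.swap s t * g) s = t := by rw [Equiv.Perm.mul_apply, hgs]; simp
  have kt : (Equiv.swap s t * g) t = s := by rw [Equiv.Perm.mul_apply, hgt]; simp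
  refine ⟨?_, ks, key⟩
  rw [mem_Mt]
  constructor
  · intro v
    by_cases hvs : v = s
    · subst hvs; rw [ks, kt]
    by_cases hvt : v = t
    · subst hvt; rw [kt, ks]
    rw [key v hvs hvt, key, h1]
    · intro e; apply hvs; rw [← h1 v, e, hgs]
    · intro e; apply hvt; rw [← h1 v, e, hgt]
  · intro v
    by_cases hvs : v = s
    · subst hvs; rw [ks]; simp [hs, ht.1]
    by_cases hvt : v = t
    · subst hvt; rw [kt]; simp [ht.2, ht.1.symm]
    rw [key v hvs hvt, h2]; simp [hvs, hvt]

lemma Mt_fiber_sum {S : Finset V} {s t : V} (hs : s ∈ S) (ht : t ∈ S.erase s)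
    (w : Equiv.Perm V → ℝ) :
    ∑ f ∈ (Mt S).filter (fun f => f s = t), w f =
      ∑ g ∈ Mt ((S.erase s).erase t), w (Equiv.swap s t * g) := by
  refine Finset.sum_bij' (fun f _ => Equiv.swap s t * f) (fun g _ => Equiv.swap s t * g)
    ?_ ?_ ?_ ?_ ?_
  · intro f hf
    rw [mem_filter] at hf
    exact (Mt_step_fwd hs hf.1 hf.2).2
  · intro g hg
    rw [mem_filter]
    exact ⟨(Mt_step_bwd hs ht hg).1, (Mt_step_bwd hs ht hg).2.1⟩
  · intro f _; simp
  · intro f _; simp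
  · intro f _; simp

lemma Mt_sum {S : Finset V} {s : V} (hs : s ∈ S) (w : Equiv.Perm V → ℝ) :
    ∑ f ∈ Mt S, w f =
      ∑ t ∈ S.erase s, ∑ g ∈ Mt ((S.erase s).erase t), w (Equiv.swap s t * g) := by
  rw [← Finset.sum_fiberwise_of_maps_to (s := Mt S) (t := S.erase s) (g := fun f => f s)]
  · apply Finset.sum_congr rfl
    intro t ht
    exact Mt_fiber_sum hs ht w
  · intro f hf
    exact (Mt_step_fwd hs hf rfl).1

/-- The number of perfect matchings of a `k`-set. -/
noncomputable def cnt : ℕ → ℝ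
  | 0 => 1
  | 1 => 0
  | (k+2) => (k+1) * cnt k

lemma cnt_nonneg : ∀ k, 0 ≤ cnt k
  | 0 => by simp [cnt]
  | 1 => by simp [cnt]
  | (k+2) => by rw [cnt]; exact mul_nonneg (by positivity) (cnt_nonneg k)

lemma cnt_even_pos : ∀ k, 0 < cnt (2*k)
  | 0 => by simp [cnt]
  | (k+1) => by
    rw [show 2*(k+1) = 2*k+2 by ring, cnt]; exact mul_pos (by positivity) (cnt_even_pos k)

lemma Mt_card (k : ℕ) : ∀ S : Finset V, S.card = k → ((Mt S).card : ℝ) = cnt k := by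
  induction k using Nat.strong_induction_on with
  | _ k ih =>
    intro S hS
    by_cases h0 : k = 0
    · subst h0
      have : S = ∅ := Finset.card_eq_zero.1 hS
      subst this
      have : Mt (∅ : Finset V) = {1} := by
        ext f
        rw [mem_Mt, mem_singleton]
        constructor
        · rintro ⟨_, h⟩
          ext v
          have := h v
          simpa using this
        · rintro rfl; simp
      rw [this]; simp [cnt]
    · obtain ⟨s, hs⟩ : S.Nonempty := by
        rw [← Finset.card_pos]; omega
      have h := Mt_sum hs (fun _ => (1:ℝ))
      simp only [sum_const, nsmul_eq_mul, mul_one] at h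
      rw [h]
      have hc : (S.erase s).card = k - 1 := by rw [card_erase_of_mem hs, hS]
      rw [Finset.sum_congr rfl (g := fun _ => cnt (k-2))]
      · rw [sum_const, nsmul_eq_mul, hc]
        obtain _ | _ | k := k
        · simp at h0
        · simp [cnt]
        · simp [cnt]
      · intro t ht
        apply ih (k-2) (by omega)
        rw [card_erase_of_mem ht, hc]; omega

/-- The set of good indices. -/
noncomputable def goodIdx (J : Finset ℕ) (u v : ℕ → V) (B : Finset V) (X : V → V → V → V → Prop)
    (f : V → V) : Finset ℕ :=
  J.filter (fun i => f (u i) ∈ B ∧ f (v i) ∈ B ∧ X (u i) (v i) (f (u i)) (f (v i)))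

lemma card_half (B : Finset V) (R : V → V → Prop) (hR : ∀ b ∈ B, ∀ b' ∈ B, b ≠ b' → R b b' ∨ R b' b) :
    ((B.card : ℝ) * (B.card - 1)) / 2 ≤
      ∑ b ∈ B, ∑ b' ∈ B.erase b, (if R b b' then (1:ℝ) else 0) := by
  have e1 : ∀ F : V → V → ℝ, ∑ b ∈ B, ∑ b' ∈ B.erase b, F b b'
      = ∑ b ∈ B, ∑ b' ∈ B, if b ≠ b' then F b b' else 0 := by
    intro F
    apply sum_congr rfl
    intro b _
    rw [← Finset.sum_filter]
    apply sum_congr _ (fun _ _ => rfl)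
    ext c; simp [and_comm, eq_comm]
  have h2 : ∑ b ∈ B, ∑ b' ∈ B.erase b, (if R b b' then (1:ℝ) else 0)
      = ∑ b ∈ B, ∑ b' ∈ B.erase b, (if R b' b then (1:ℝ) else 0) := by
    rw [e1, e1, Finset.sum_comm]
    simp only [ne_comm]
  have h3 : ∑ b ∈ B, ∑ b' ∈ B.erase b, (1:ℝ) ≤
      ∑ b ∈ B, ∑ b' ∈ B.erase b, (if R b b' then (1:ℝ) else 0)
      + ∑ b ∈ B, ∑ b' ∈ B.erase b, (if R b' b then (1:ℝ) else 0) := by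
    rw [← sum_add_distrib]
    apply sum_le_sum
    intro b hb
    rw [← sum_add_distrib]
    apply sum_le_sum
    intro b' hb'
    rw [mem_erase] at hb'
    rcases hR b hb b' hb'.2 hb'.1.symm with h | h
    · rw [if_pos h]; split_ifs <;> norm_num
    · rw [if_pos h]; split_ifs <;> norm_num
  have h4 : ∑ b ∈ B, ∑ b' ∈ B.erase b, (1:ℝ) = (B.card : ℝ) * (B.card - 1) := by
    rw [sum_congr rfl (g := fun _ => ((B.card : ℝ) - 1))]
    · simp; ring
    · intro b hb
      rw [sum_const, card_erase_of_mem hb, nsmul_eq_mul, mul_one,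
        Nat.cast_sub (Finset.card_pos.2 ⟨b, hb⟩)]
      simp
  rw [h4, ← h2] at h3
  linarith


lemma goodIdx_pow_le {J J' : Finset ℕ} {u v : ℕ → V} {B B' : Finset V}
    {X : V → V → V → V → Prop} {f g : V → V} (hJ : J' ⊆ J) (hB : B' ⊆ B)
    (hu : ∀ i ∈ J', f (u i) = g (u i)) (hv : ∀ i ∈ J', f (v i) = g (v i)) :
    (3/4 : ℝ) ^ (goodIdx J u v B X f).card ≤ (3/4 : ℝ) ^ (goodIdx J' u v B' X g).card := by
  apply pow_le_pow_of_le_one (by norm_num) (by norm_num)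
  apply card_le_card
  intro i hi
  simp only [goodIdx, mem_filter] at hi ⊢
  rw [hu i hi.1, hv i hi.1]
  exact ⟨hJ hi.1, hB hi.2.1, hB hi.2.2.1, hi.2.2.2⟩

lemma goodIdx_pow_le' {J J' : Finset ℕ} {u v : ℕ → V} {B B' : Finset V}
    {X : V → V → V → V → Prop} {f g : V → V} (hJ : J' ⊆ J) (hB : B' ⊆ B)
    (hu : ∀ i ∈ J', f (u i) = g (u i)) (hv : ∀ i ∈ J', f (v i) = g (v i))
    (i₀ : ℕ) (h0 : i₀ ∈ J) (h0' : i₀ ∉ J') (hb1 : f (u i₀) ∈ B) (hb2 : f (v i₀) ∈ B)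
    (hX : X (u i₀) (v i₀) (f (u i₀)) (f (v i₀))) :
    (3/4 : ℝ) ^ (goodIdx J u v B X f).card ≤
      (3/4 : ℝ) ^ (goodIdx J' u v B' X g).card * (3/4) := by
  rw [← pow_succ]
  apply pow_le_pow_of_le_one (by norm_num) (by norm_num)
  have hn : i₀ ∉ goodIdx J' u v B' X g := by
    simp only [goodIdx, mem_filter]; tauto
  rw [← card_insert_of_notMem hn]
  apply card_le_card
  intro i hi
  rw [mem_insert] at hi
  rcases hi with rfl | hi
  · simp only [goodIdx, mem_filter]; exact ⟨h0, hb1, hb2, hX⟩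
  · simp only [goodIdx, mem_filter] at hi ⊢
    rw [hu i hi.1, hv i hi.1]
    exact ⟨hJ hi.1, hB hi.2.1, hB hi.2.2.1, hi.2.2.2⟩

lemma card_J' {J : Finset ℕ} {m i j : ℕ} (h : 2 * (m+1) ≤ J.card) :
    2 * m ≤ ((J.erase i).erase j).card := by
  have h1 := Finset.pred_card_le_card_erase (s := J) (a := i)
  have h2 := Finset.pred_card_le_card_erase (s := J.erase i) (a := j)
  omega

lemma final_arith (k b c s : ℝ) (hk : 0 ≤ k) (hkb : k + 4 ≤ 2 * b) (hc : 0 ≤ c)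
    (hs : b * (b - 1) / 2 ≤ s) :
    (k + 3) * ((k + 1) * c) - 1 / 4 * c * s ≤ 31 / 32 * ((k + 3) * ((k + 1) * c)) := by
  have h1 : (k + 3) * (k + 1) ≤ 4 * (b * (b - 1)) := by nlinarith
  have h2 : (k + 3) * (k + 1) / 32 ≤ 1 / 4 * s := by linarith
  have h3 := mul_le_mul_of_nonneg_right h2 hc
  linarith

set_option maxHeartbeats 1000000 in
lemma main_rec (X : V → V → V → V → Prop) (u v : ℕ → V) (κ : V → ℕ) (m : ℕ) :
    ∀ (A B : Finset V) (J : Finset ℕ), Disjoint A B → A.card ≤ B.card → 2 * m ≤ J.card →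
    (∀ i ∈ J, u i ∈ A ∧ v i ∈ A ∧ u i ≠ v i ∧ κ (u i) = i ∧ κ (v i) = i) →
    (∀ i ∈ J, ∀ b ∈ B, ∀ b' ∈ B, b ≠ b' → X (u i) (v i) b b' ∨ X (u i) (v i) b' b) →
    ∑ f ∈ Mt (A ∪ B), (3/4 : ℝ) ^ (goodIdx J u v B X f).card
      ≤ (31/32) ^ m * cnt (A ∪ B).card := by
  induction m with
  | zero =>
    intro A B J _ _ _ _ _
    rw [pow_zero, one_mul, ← Mt_card _ (A ∪ B) rfl, ← nsmul_one, ← sum_const]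
    apply sum_le_sum
    intro f _
    exact pow_le_one₀ (by norm_num) (by norm_num)
  | succ m ih =>
    intro A B J hAB hle hJ hidx hX
    obtain ⟨i, hi⟩ : J.Nonempty := by rw [← card_pos]; omega
    obtain ⟨hu, hv, huv, hκu, hκv⟩ := hidx i hi
    have hdis : ∀ z, z ∈ A → z ∉ B := fun z h h' => (Finset.disjoint_left.1 hAB) h h'
    have huB := hdis _ hu
    have hvB := hdis _ hv
    obtain ⟨S, hS⟩ : ∃ S, S = A ∪ B := ⟨_, rfl⟩
    have huS : u i ∈ S := by rw [hS]; exact mem_union_left _ hu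
    have hvS : v i ∈ S := by rw [hS]; exact mem_union_left _ hv
    have hA2 : 2 ≤ A.card := by
      have : ({u i, v i} : Finset V) ⊆ A := by
        intro z hz; simp only [mem_insert, mem_singleton] at hz
        rcases hz with rfl | rfl <;> assumption
      have h := card_le_card this
      rwa [card_pair huv] at h
    have hScard : S.card = A.card + B.card := by rw [hS, card_union_of_disjoint hAB]
    obtain ⟨k, hk⟩ : ∃ k, S.card = k + 4 := ⟨S.card - 4, by omega⟩
    rw [← hS, Mt_sum huS, hk]
    have hc1 : (S.erase (u i)).card = k + 3 := by rw [card_erase_of_mem huS]; omega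
    have hc2 : ∀ t ∈ S.erase (u i), ((S.erase (u i)).erase t).card = k + 2 := by
      intro t ht; rw [card_erase_of_mem ht]; omega
    let s : V → ℝ := fun t1 => ∑ t2 ∈ B.erase t1, (if X (u i) (v i) t1 t2 then (1:ℝ) else 0)
    let G : V → ℝ := fun t1 => if t1 ∈ B then s t1 else 0
    have hinner : ∀ t1 ∈ S.erase (u i),
        ∑ g ∈ Mt ((S.erase (u i)).erase t1),
          (3/4 : ℝ) ^ (goodIdx J u v B X (Equiv.swap (u i) t1 * g : Equiv.Perm V)).card
        ≤ (31/32)^m * (cnt (k+2) - 1/4 * cnt k * G t1) := by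
      intro t1 ht1
      have ht1' := mem_erase.1 ht1
      by_cases hB1 : t1 ∈ B
      · have hGs : G t1 = s t1 := if_pos hB1
        have htu : t1 ≠ u i := ht1'.1
        have htv : t1 ≠ v i := by rintro rfl; exact hvB hB1
        have hvS1 : v i ∈ (S.erase (u i)).erase t1 := by
          simp only [mem_erase]; exact ⟨htv.symm, huv.symm, hvS⟩
        rw [Mt_sum hvS1]
        have hc3 : (((S.erase (u i)).erase t1).erase (v i)).card = k + 1 := by
          rw [card_erase_of_mem hvS1, hc2 t1 ht1]; omega
        have hin2 : ∀ t2 ∈ ((S.erase (u i)).erase t1).erase (v i),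
            ∑ h ∈ Mt ((((S.erase (u i)).erase t1).erase (v i)).erase t2),
              (3/4 : ℝ) ^ (goodIdx J u v B X
                (Equiv.swap (u i) t1 * (Equiv.swap (v i) t2 * h) : Equiv.Perm V)).card
            ≤ (31/32)^m * (cnt k - 1/4 * cnt k *
                (if t2 ∈ B.erase t1 then (if X (u i) (v i) t1 t2 then (1:ℝ) else 0) else 0)) := by
          intro t2 ht2
          have hc4 : ((((S.erase (u i)).erase t1).erase (v i)).erase t2).card = k := by
            rw [card_erase_of_mem ht2, hc3]; omega
          have hSe : (((S.erase (u i)).erase t1).erase (v i)).erase t2 =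
              (((A.erase (u i)).erase (v i)).erase t2) ∪ ((B.erase t1).erase t2) := by
            ext z
            simp only [hS, mem_erase, mem_union]
            have h1 : z ∈ A → z ≠ t1 := by rintro h rfl; exact hdis _ h hB1
            have h2 : z ∈ B → z ≠ u i := by rintro h rfl; exact huB h
            have h3 : z ∈ B → z ≠ v i := by rintro h rfl; exact hvB h
            tauto
          have ht2' : t2 ≠ v i ∧ t2 ≠ t1 ∧ t2 ≠ u i ∧ t2 ∈ S := by
            simpa only [mem_erase] using ht2
          have hcle : ((A.erase (u i)).erase (v i)).card = A.card - 2 := by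
            rw [card_erase_of_mem (mem_erase.2 ⟨huv.symm, hv⟩), card_erase_of_mem hu]; omega
          have hcB : (B.erase t1).card = B.card - 1 := card_erase_of_mem hB1
          have hcard : (((A.erase (u i)).erase (v i)).erase t2).card ≤
              ((B.erase t1).erase t2).card := by
            by_cases h : t2 ∈ A
            · have h' := hdis _ h
              rw [card_erase_of_mem (by simp only [mem_erase]; exact ⟨ht2'.1, ht2'.2.2.1, h⟩),
                erase_eq_of_notMem (s := B.erase t1) (by simp [h'])]
              omega
            · rw [erase_eq_of_notMem (a := t2) (s := (A.erase (u i)).erase (v i)) (by simp [h])]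
              have := Finset.pred_card_le_card_erase (s := B.erase t1) (a := t2)
              omega
          have hJsub : ((J.erase i).erase (κ t2)) ⊆ J :=
            (erase_subset _ _).trans (erase_subset _ _)
          have hne : ∀ j ∈ (J.erase i).erase (κ t2),
              (u j ≠ u i ∧ u j ≠ v i ∧ u j ≠ t2 ∧ u j ≠ t1) ∧
              (v j ≠ u i ∧ v j ≠ v i ∧ v j ≠ t2 ∧ v j ≠ t1) := by
            intro j hj
            simp only [mem_erase] at hj
            obtain ⟨a1, a2, a3, a4, a5⟩ := hidx j hj.2.2
            refine ⟨⟨?_, ?_, ?_, ?_⟩, ⟨?_, ?_, ?_, ?_⟩⟩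
            · intro e; rw [e, hκu] at a4; exact hj.2.1 a4.symm
            · intro e; rw [e, hκv] at a4; exact hj.2.1 a4.symm
            · intro e; rw [e] at a4; exact hj.1 a4.symm
            · intro e; rw [e] at a1; exact hdis _ a1 hB1
            · intro e; rw [e, hκu] at a5; exact hj.2.1 a5.symm
            · intro e; rw [e, hκv] at a5; exact hj.2.1 a5.symm
            · intro e; rw [e] at a5; exact hj.1 a5.symm
            · intro e; rw [e] at a2; exact hdis _ a2 hB1
          have hIH := ih _ _ ((J.erase i).erase (κ t2)) (by
              rw [Finset.disjoint_left]
              intro z hz hz'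
              simp only [mem_erase] at hz hz'
              exact hdis _ hz.2.2.2 hz'.2.2) hcard (card_J' hJ) (by
              intro j hj
              have hn := hne j hj
              obtain ⟨a1, a2, a3, a4, a5⟩ := hidx j (hJsub hj)
              simp only [mem_erase]
              refine ⟨⟨hn.1.2.2.1, hn.1.2.1, hn.1.1, a1⟩, ⟨hn.2.2.2.1, hn.2.2.1, hn.2.1, a2⟩,
                a3, a4, a5⟩) (by
              intro j hj b hb b' hb' hbb
              simp only [mem_erase] at hb hb'
              exact hX j (hJsub hj) b hb.2.2 b' hb'.2.2 hbb)
          rw [← hSe, hc4] at hIH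
          have hBsub : (B.erase t1).erase t2 ⊆ B := (erase_subset _ _).trans (erase_subset _ _)
          have hfacts : ∀ h ∈ Mt ((((S.erase (u i)).erase t1).erase (v i)).erase t2),
              (Equiv.swap (u i) t1 * (Equiv.swap (v i) t2 * h) : Equiv.Perm V) (u i) = t1 ∧
              (Equiv.swap (u i) t1 * (Equiv.swap (v i) t2 * h) : Equiv.Perm V) (v i) = t2 ∧
              ∀ z, z ≠ u i → z ≠ v i → z ≠ t2 → z ≠ t1 →
                (Equiv.swap (u i) t1 * (Equiv.swap (v i) t2 * h) : Equiv.Perm V) z = h z := by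
            intro h hh
            obtain ⟨b1, b2, b3⟩ := Mt_step_bwd hvS1 ht2 hh
            obtain ⟨d1, d2, d3⟩ := Mt_step_bwd huS ht1 b1
            refine ⟨d2, ?_, ?_⟩
            · rw [d3 _ huv.symm htv.symm, b2]
            · intro z z1 z2 z3 z4
              rw [d3 _ z1 z4, b3 _ z2 z3]
          by_cases hbad : t2 ∈ B.erase t1 ∧ X (u i) (v i) t1 t2
          · rw [if_pos hbad.1, if_pos hbad.2]
            calc _ ≤ ∑ h ∈ Mt ((((S.erase (u i)).erase t1).erase (v i)).erase t2),
                (3/4 : ℝ) ^ (goodIdx ((J.erase i).erase (κ t2)) u v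
                  ((B.erase t1).erase t2) X h).card * (3/4) := by
                  apply sum_le_sum
                  intro h hh
                  obtain ⟨f1, f2, f3⟩ := hfacts h hh
                  apply goodIdx_pow_le' hJsub hBsub _ _ i hi (by simp)
                  · rw [f1]; exact hB1
                  · rw [f2]; exact mem_of_mem_erase hbad.1
                  · rw [f1, f2]; exact hbad.2
                  · intro j hj
                    have hn := (hne j hj).1
                    exact f3 _ hn.1 hn.2.1 hn.2.2.1 hn.2.2.2
                  · intro j hj
                    have hn := (hne j hj).2
                    exact f3 _ hn.1 hn.2.1 hn.2.2.1 hn.2.2.2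
              _ ≤ ((31/32)^m * cnt k) * (3/4) := by
                  rw [← sum_mul]
                  exact mul_le_mul_of_nonneg_right hIH (by norm_num)
              _ = _ := by ring
          · have : (if t2 ∈ B.erase t1 then (if X (u i) (v i) t1 t2 then (1:ℝ) else 0) else 0)
                = 0 := by
              split_ifs with h1 h2
              · exact absurd ⟨h1, h2⟩ hbad
              · rfl
              · rfl
            rw [this, mul_zero, sub_zero]
            refine le_trans ?_ hIH
            apply sum_le_sum
            intro h hh
            obtain ⟨f1, f2, f3⟩ := hfacts h hh
            apply goodIdx_pow_le hJsub hBsub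
            · intro j hj
              have hn := (hne j hj).1
              exact f3 _ hn.1 hn.2.1 hn.2.2.1 hn.2.2.2
            · intro j hj
              have hn := (hne j hj).2
              exact f3 _ hn.1 hn.2.1 hn.2.2.1 hn.2.2.2
        refine (sum_le_sum hin2).trans ?_
        rw [← mul_sum, sum_sub_distrib, sum_const, hc3, ← mul_sum, ← Finset.sum_filter, hGs]
        have : (((S.erase (u i)).erase t1).erase (v i)).filter (fun t2 => t2 ∈ B.erase t1)
            = B.erase t1 := by
          ext z
          simp only [hS, mem_filter, mem_erase, mem_union]
          have h2 : z ∈ B → z ≠ u i := by rintro h rfl; exact huB h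
          have h3 : z ∈ B → z ≠ v i := by rintro h rfl; exact hvB h
          tauto
        rw [this, cnt]
        simp only [nsmul_eq_mul, s]
        push_cast
        exact le_refl _
      · have hG0 : G t1 = 0 := if_neg hB1
        rw [hG0, mul_zero, sub_zero]
        have ht1A : t1 ∈ A := by
          have := ht1'.2; rw [hS, mem_union] at this; tauto
        have hSe : (S.erase (u i)).erase t1 = ((A.erase (u i)).erase t1) ∪ B := by
          ext z
          simp only [hS, mem_erase, mem_union]
          have h1 : z ∈ B → z ≠ t1 := by rintro h rfl; exact hB1 h
          have h2 : z ∈ B → z ≠ u i := by rintro h rfl; exact huB h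
          tauto
        have hJsub : ((J.erase i).erase (κ t1)) ⊆ J :=
          (erase_subset _ _).trans (erase_subset _ _)
        have hne : ∀ j ∈ (J.erase i).erase (κ t1),
            (u j ≠ u i ∧ u j ≠ t1) ∧ (v j ≠ u i ∧ v j ≠ t1) := by
          intro j hj
          simp only [mem_erase] at hj
          obtain ⟨a1, a2, a3, a4, a5⟩ := hidx j hj.2.2
          refine ⟨⟨?_, ?_⟩, ⟨?_, ?_⟩⟩
          · intro e; rw [e, hκu] at a4; exact hj.2.1 a4.symm
          · intro e; rw [e] at a4; exact hj.1 a4.symm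
          · intro e; rw [e, hκu] at a5; exact hj.2.1 a5.symm
          · intro e; rw [e] at a5; exact hj.1 a5.symm
        have hIH := ih ((A.erase (u i)).erase t1) B ((J.erase i).erase (κ t1)) (by
            rw [Finset.disjoint_left]
            intro z hz hz'
            simp only [mem_erase] at hz
            exact hdis _ hz.2.2 hz')
          ((card_le_card ((erase_subset _ _).trans (erase_subset _ _))).trans hle)
          (card_J' hJ) (by
            intro j hj
            have hn := hne j hj
            obtain ⟨a1, a2, a3, a4, a5⟩ := hidx j (hJsub hj)
            simp only [mem_erase]
            exact ⟨⟨hn.1.2, hn.1.1, a1⟩, ⟨hn.2.2, hn.2.1, a2⟩, a3, a4, a5⟩) (by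
            intro j hj
            exact hX j (hJsub hj))
        rw [← hSe, hc2 t1 ht1] at hIH
        refine le_trans ?_ hIH
        apply sum_le_sum
        intro g hg
        obtain ⟨d1, d2, d3⟩ := Mt_step_bwd huS ht1 hg
        apply goodIdx_pow_le hJsub (Finset.Subset.refl _)
        · intro j hj; exact d3 _ (hne j hj).1.1 (hne j hj).1.2
        · intro j hj; exact d3 _ (hne j hj).2.1 (hne j hj).2.2
    refine (sum_le_sum hinner).trans ?_
    rw [← mul_sum, sum_sub_distrib, sum_const, hc1, ← mul_sum, ← Finset.sum_filter]
    have hf : (S.erase (u i)).filter (fun t => t ∈ B) = B := by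
      ext z
      simp only [hS, mem_filter, mem_erase, mem_union]
      have h2 : z ∈ B → z ≠ u i := by rintro h rfl; exact huB h
      tauto
    rw [hf, pow_succ, mul_assoc ((31/32:ℝ)^m) (31/32)]
    apply mul_le_mul_of_nonneg_left _ (by positivity)
    have hhalf := card_half B (fun b b' => X (u i) (v i) b b') (hX i hi)
    change _ ≤ ∑ b ∈ B, s b at hhalf
    have hk0 := cnt_nonneg k
    have hkb : (k : ℝ) + 4 ≤ 2 * B.card := by
      have : k + 4 ≤ 2 * B.card := by omega
      exact_mod_cast this
    have e1 : cnt (k+2) = (k+1) * cnt k := by rw [cnt]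
    have e2 : cnt (k+4) = (k+3) * ((k+1) * cnt k) := by
      rw [show k + 4 = (k+2)+2 by ring, cnt, e1]; push_cast; ring
    rw [e2, e1, nsmul_eq_mul]
    push_cast
    have hk' : (0:ℝ) ≤ k := by positivity
    exact final_arith _ _ _ _ hk' hkb hk0 hhalf

end Matchings

section Bits
variable {I : Type*} [Fintype I] [DecidableEq I]

/-- The bit pattern that produces a directed triangle. -/
def badBit (k1 k2 k3 : ℕ → I) (s2 s3 : ℕ → Bool) (i : ℕ) (β : I → Bool) : Prop :=
  β (k2 i) = xor (β (k1 i)) (s2 i) ∧ β (k3 i) = xor (β (k1 i)) (s3 i)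

lemma bits_bound (k1 k2 k3 : ℕ → I) (s2 s3 : ℕ → Bool) (J : Finset ℕ) :
    (∀ i ∈ J, k1 i ≠ k2 i ∧ k1 i ≠ k3 i ∧ k2 i ≠ k3 i) →
    (∀ i ∈ J, ∀ j ∈ J, i ≠ j → k2 i ≠ k1 j ∧ k2 i ≠ k2 j ∧ k2 i ≠ k3 j ∧
      k3 i ≠ k1 j ∧ k3 i ≠ k2 j ∧ k3 i ≠ k3 j) →
    ((univ.filter fun β : I → Bool => ∀ i ∈ J, ¬ badBit k1 k2 k3 s2 s3 i β).card : ℝ)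
      ≤ (3/4) ^ J.card * Fintype.card (I → Bool) := by
  induction J using Finset.induction_on with
  | empty => intro _ _; simp
  | insert i J hi ih =>
    intro h hd
    have ih' := ih (fun j hj => h j (mem_insert_of_mem hj))
      (fun j hj j' hj' => hd j (mem_insert_of_mem hj) j' (mem_insert_of_mem hj'))
    obtain ⟨h12, h13, h23⟩ := h i (mem_insert_self _ _)
    set F := univ.filter fun β : I → Bool => ∀ j ∈ J, ¬ badBit k1 k2 k3 s2 s3 j β with hF
    have hsplit : (univ.filter fun β : I → Bool => ∀ j ∈ insert i J, ¬ badBit k1 k2 k3 s2 s3 j β)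
        = F.filter (fun β => ¬ badBit k1 k2 k3 s2 s3 i β) := by
      ext β; simp [hF, and_comm]
    have hadd := Finset.card_filter_add_card_filter_not (s := F)
      (fun β => badBit k1 k2 k3 s2 s3 i β)
    have h4 : F.card ≤ 4 * (F.filter (fun β => badBit k1 k2 k3 s2 s3 i β)).card := by
      let φ : (I → Bool) → (I → Bool) := fun β =>
        Function.update (Function.update β (k2 i) (xor (β (k1 i)) (s2 i)))
          (k3 i) (xor (β (k1 i)) (s3 i))
      have hφ : ∀ β z, z ≠ k2 i → z ≠ k3 i → φ β z = β z := by
        intro β z h1 h2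
        simp only [φ]
        rw [Function.update_of_ne h2, Function.update_of_ne h1]
      apply Finset.card_le_mul_card_image_of_maps_to (f := φ)
      · intro β hβ
        rw [hF, mem_filter] at hβ
        rw [mem_filter, hF, mem_filter]
        refine ⟨⟨mem_univ _, ?_⟩, ?_⟩
        · intro j hj
          have hij : i ≠ j := by rintro rfl; exact hi hj
          obtain ⟨d1, d2, d3, d4, d5, d6⟩ := hd i (mem_insert_self _ _) j (mem_insert_of_mem hj) hij
          have := hβ.2 j hj
          unfold badBit at this ⊢
          rwa [hφ _ _ d1.symm d4.symm, hφ _ _ d2.symm d5.symm, hφ _ _ d3.symm d6.symm]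
        · unfold badBit
          rw [hφ β (k1 i) h12 h13]
          constructor
          · simp only [φ]; rw [Function.update_of_ne h23]; simp
          · simp [φ]
      · intro γ _
        have : (F.filter (fun β => φ β = γ)).card ≤ (univ : Finset (Bool × Bool)).card := by
          apply Finset.card_le_card_of_injOn (fun β => (β (k2 i), β (k3 i)))
          · intro _ _; simp
          · intro β hβ β' hβ' he
            simp only [coe_filter, Set.mem_ofPred_eq] at hβ hβ'
            simp only [Prod.mk.injEq] at he
            funext z
            by_cases z2 : z = k2 i
            · rw [z2]; exact he.1
            by_cases z3 : z = k3 i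
            · rw [z3]; exact he.2
            rw [← hφ β z z2 z3, ← hφ β' z z2 z3, hβ.2, hβ'.2]
        simpa using this
    rw [hsplit, card_insert_of_notMem hi, pow_succ]
    have h4' : (F.card : ℝ) ≤ 4 * (F.filter (fun β => badBit k1 k2 k3 s2 s3 i β)).card := by
      exact_mod_cast h4
    have hadd' : ((F.filter (fun β => badBit k1 k2 k3 s2 s3 i β)).card : ℝ)
      + (F.filter (fun β => ¬ badBit k1 k2 k3 s2 s3 i β)).card = F.card := by
      exact_mod_cast hadd
    linarith
end Bits

section Orient
variable {n : ℕ}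

lemma between_iff {m : ℕ} (a b c : Fin m) :
    Between a b c ↔ ((a:ℕ) < c ∨ (b:ℕ) < c) ∧ ((c:ℕ) < a ∨ (c:ℕ) < b) := by
  simp only [Between, min_lt_iff, lt_max_iff, Fin.lt_def]

/-- The chords `ab` and `cd` cross. -/
def cross4 {m : ℕ} (a b c d : Fin m) : Prop := Xor' (Between a b c) (Between a b d)

lemma cross4_symm {m : ℕ} (a b c d : Fin m) (h : cross4 a b c d) (h1 : a ≠ c) (h2 : a ≠ d)
    (h3 : b ≠ c) (h4 : b ≠ d) : cross4 c d a b := by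
  simp only [cross4, Xor', xor_def, between_iff, ne_eq, Fin.ext_iff] at *
  omega

lemma cross4_or {m : ℕ} (x y a a' b b' : Fin m) (hxy : x ≠ y) (haa : a ≠ a') (hbb : b ≠ b')
    (ha : Between x y a) (ha' : Between x y a') (hb : ¬ Between x y b) (hb' : ¬ Between x y b')
    (h1 : b ≠ x) (h2 : b ≠ y) (h3 : b' ≠ x) (h4 : b' ≠ y) :
    (cross4 a b a' b' ∨ cross4 a b' a' b) ∧ (cross4 b a b' a' ∨ cross4 b a' b' a) := by
  simp only [cross4, Xor', xor_def, between_iff, ne_eq, Fin.ext_iff] at *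
  omega

lemma crosses_ne (C : ChordDiagram n) (p q : Fin (2*n)) (h : Crosses C p q) :
    q ≠ p ∧ q ≠ C.1 p := by
  constructor
  · rintro rfl
    simp [Crosses, between_iff, Xor', xor_def] at h; omega
  · rintro rfl
    simp [Crosses, between_iff, Xor', xor_def, C.2.1 p] at h; omega

lemma crosses_symm (C : ChordDiagram n) (p q : Fin (2*n)) (h : Crosses C p q) :
    Crosses C q p := by
  obtain ⟨h1, h2⟩ := crosses_ne C p q h
  apply cross4_symm _ _ _ _ h h1.symm _ h2.symm
  · intro e; apply h1; rw [← C.2.1 p, ← C.2.1 q, e]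
  · intro e; apply h2; rw [e, C.2.1]

lemma rep_eq (C : ChordDiagram n) (p q : Fin (2*n)) (h : chordRep C p = chordRep C q) :
    q = p ∨ q = C.1 p := by
  unfold chordRep at h
  rcases min_choice p (C.1 p) with h1 | h1 <;> rcases min_choice q (C.1 q) with h2 | h2 <;>
    rw [h1, h2] at h
  · left; exact h.symm
  · right; rw [h, C.2.1]
  · right; exact h.symm
  · left; rw [← C.2.1 p, ← C.2.1 q, h]

lemma crosses_rep_ne (C : ChordDiagram n) (p q : Fin (2*n)) (h : Crosses C p q) :
    chordRep C p ≠ chordRep C q := by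
  intro e
  have h1 := crosses_ne C p q h
  rcases rep_eq C p q e with h2 | h2
  · exact h1.1 h2
  · exact h1.2 h2

/-- The coordinate of the coin for two chords. -/
noncomputable def keyC (C : ChordDiagram n) (p q : Fin (2*n)) : Fin (2*n) × Fin (2*n) :=
  if chordRep C p ≤ chordRep C q then (chordRep C p, chordRep C q)
  else (chordRep C q, chordRep C p)

/-- The value of the coin for which `p` over-crosses `q`. -/
noncomputable def sgC (C : ChordDiagram n) (p q : Fin (2*n)) : Bool :=
  decide (chordRep C p ≤ chordRep C q)

lemma over_iff (C : ChordDiagram n) (β : Fin (2*n) → Fin (2*n) → Bool) (p q : Fin (2*n))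
    (h : Crosses C p q) :
    OverD (C, β) p q ↔ Function.uncurry β (keyC C p q) = sgC C p q := by
  unfold OverD keyC sgC
  by_cases hle : chordRep C p ≤ chordRep C q
  · simp [hle, h, not_lt.2 hle]
  · simp [hle, h, not_le.1 hle]

lemma over_iff' (C : ChordDiagram n) (β : Fin (2*n) → Fin (2*n) → Bool) (p q : Fin (2*n))
    (h : Crosses C p q) :
    OverD (C, β) q p ↔ Function.uncurry β (keyC C p q) = !(sgC C p q) := by
  have hne := crosses_rep_ne C p q h
  have h' := crosses_symm C p q h
  rw [over_iff C β q p h']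
  unfold keyC sgC
  by_cases hle : chordRep C p ≤ chordRep C q
  · have : ¬ chordRep C q ≤ chordRep C p := fun h => hne (le_antisymm hle h)
    simp [hle, this]
  · have := (not_le.1 hle).le
    simp [hle, this]

lemma keyC_eq (C : ChordDiagram n) (p q p' q' : Fin (2*n)) (h : keyC C p q = keyC C p' q') :
    (chordRep C p = chordRep C p' ∧ chordRep C q = chordRep C q') ∨
    (chordRep C p = chordRep C q' ∧ chordRep C q = chordRep C p') := by
  unfold keyC at h
  split_ifs at h <;> simp only [Prod.mk.injEq] at h <;> tauto

lemma triangle_mutual (C : ChordDiagram n) (β : Fin (2*n) → Fin (2*n) → Bool)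
    (x u v : Fin (2*n)) (h1 : Crosses C x u) (h2 : Crosses C x v) (h3 : Crosses C u v)
    (e2 : Function.uncurry β (keyC C x v) =
      xor (Function.uncurry β (keyC C x u)) (xor (sgC C x u) (!(sgC C x v))))
    (e3 : Function.uncurry β (keyC C u v) =
      xor (Function.uncurry β (keyC C x u)) (xor (sgC C x u) (sgC C u v))) :
    MutualReach (C, β) x u := by
  by_cases hb : Function.uncurry β (keyC C x u) = sgC C x u
  · have o1 : OverD (C, β) x u := (over_iff C β x u h1).2 hb
    have o2 : OverD (C, β) u v := (over_iff C β u v h3).2 (by rw [e3, hb]; simp)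
    have o3 : OverD (C, β) v x := (over_iff' C β x v h2).2 (by rw [e2, hb]; simp)
    exact ⟨Or.inr (Or.inr (Relation.ReflTransGen.single o1)),
      Or.inr (Or.inr ((Relation.ReflTransGen.single o2).tail o3))⟩
  · have hb' : Function.uncurry β (keyC C x u) = !(sgC C x u) := by
      revert hb
      cases Function.uncurry β (keyC C x u) <;> cases sgC C x u <;> simp
    have o1 : OverD (C, β) u x := (over_iff' C β x u h1).2 hb'
    have o2 : OverD (C, β) v u := (over_iff' C β u v h3).2 (by
      rw [e3, hb']; cases sgC C x u <;> simp)
    have o3 : OverD (C, β) x v := (over_iff C β x v h2).2 (by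
      rw [e2, hb']; cases sgC C x u <;> simp)
    exact ⟨Or.inr (Or.inr ((Relation.ReflTransGen.single o3).tail o2)),
      Or.inr (Or.inr (Relation.ReflTransGen.single o1))⟩

/-- The chord of `x` is alone in its strong component. -/
def Alone (D : OrientedChordDiagram n) (x : Fin (2*n)) : Prop :=
  ∀ u : Fin (2*n), u ≠ x → u ≠ D.1.1 x → ¬ MutualReach D x u

lemma orient_bound (C : ChordDiagram n) (x : Fin (2*n)) (J : Finset ℕ) (u v : ℕ → Fin (2*n))
    (hc : ∀ i ∈ J, Crosses C x (u i) ∧ Crosses C x (v i) ∧ Crosses C (u i) (v i))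
    (hd : ∀ i ∈ J, ∀ j ∈ J, i ≠ j → chordRep C (u i) ≠ chordRep C (u j) ∧
      chordRep C (u i) ≠ chordRep C (v j) ∧ chordRep C (v i) ≠ chordRep C (v j)) :
    ((univ.filter fun β : Fin (2*n) → Fin (2*n) → Bool => Alone (C, β) x).card : ℝ)
      ≤ (3/4) ^ J.card * Fintype.card (Fin (2*n) → Fin (2*n) → Bool) := by
  have hb := bits_bound (fun i => keyC C x (u i)) (fun i => keyC C x (v i))
    (fun i => keyC C (u i) (v i)) (fun i => xor (sgC C x (u i)) (!(sgC C x (v i))))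
    (fun i => xor (sgC C x (u i)) (sgC C (u i) (v i))) J ?_ ?_
  · have hcard : Fintype.card (Fin (2*n) × Fin (2*n) → Bool) =
        Fintype.card (Fin (2*n) → Fin (2*n) → Bool) :=
      Fintype.card_congr (Equiv.curry _ _ _)
    rw [hcard] at hb
    refine le_trans ?_ hb
    norm_cast
    apply Finset.card_le_card_of_injOn (fun β => Function.uncurry β)
    · intro β hβ
      simp only [coe_filter, mem_univ, true_and, Set.mem_ofPred_eq] at hβ ⊢
      intro i hi hbad
      obtain ⟨c1, c2, c3⟩ := hc i hi
      have hne := crosses_ne C x (u i) c1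
      exact hβ (u i) hne.1 hne.2 (triangle_mutual C β x (u i) (v i) c1 c2 c3 hbad.1 hbad.2)
    · intro β _ β' _ h
      exact Function.uncurry_injective h
  · intro i hi
    obtain ⟨c1, c2, c3⟩ := hc i hi
    have r1 := crosses_rep_ne _ _ _ c1
    have r2 := crosses_rep_ne _ _ _ c2
    have r3 := crosses_rep_ne _ _ _ c3
    refine ⟨?_, ?_, ?_⟩ <;> intro h <;> have := keyC_eq C _ _ _ _ h <;> grind
  · intro i hi j hj hij
    obtain ⟨c1, c2, c3⟩ := hc i hi
    have r1 := crosses_rep_ne _ _ _ c1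
    have r2 := crosses_rep_ne _ _ _ c2
    have r3 := crosses_rep_ne _ _ _ c3
    obtain ⟨c1', c2', c3'⟩ := hc j hj
    have r1' := crosses_rep_ne _ _ _ c1'
    have r2' := crosses_rep_ne _ _ _ c2'
    have r3' := crosses_rep_ne _ _ _ c3'
    have d1 := hd i hi j hj hij
    have d2 := hd j hj i hi hij.symm
    refine ⟨?_, ?_, ?_, ?_, ?_, ?_⟩ <;> intro h <;> have := keyC_eq C _ _ _ _ h <;> grind

end Orient

section Assemble
variable {n : ℕ}

/-- A chord diagram as a permutation. -/
def toPermC (C : ChordDiagram n) : Equiv.Perm (Fin (2*n)) := ⟨C.1, C.1, C.2.1, C.2.1⟩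

lemma sum_diagrams (x y : Fin (2*n)) (w : (Fin (2*n) → Fin (2*n)) → ℝ) :
    ∑ C ∈ (univ : Finset (ChordDiagram n)).filter (fun C => C.1 x = y), w C.1 =
      ∑ f ∈ (Mt (univ : Finset (Fin (2*n)))).filter (fun f => f x = y), w f := by
  refine Finset.sum_bij (fun C _ => toPermC C) ?_ ?_ ?_ ?_
  · intro C hC
    simp only [mem_filter, mem_univ, true_and] at hC
    rw [mem_filter, mem_Mt]
    exact ⟨⟨C.2.1, fun v => ⟨fun _ => mem_univ _, fun _ => C.2.2 v⟩⟩, hC⟩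
  · intro C _ C' _ h
    apply Subtype.ext
    funext v
    exact congrArg (fun f : Equiv.Perm (Fin (2*n)) => f v) h
  · intro f hf
    rw [mem_filter, mem_Mt] at hf
    refine ⟨⟨f, hf.1.1, fun v => (hf.1.2 v).2 (mem_univ _)⟩, ?_, ?_⟩
    · simp [hf.2]
    · ext v; rfl
  · intro C _; rfl

lemma card_diagrams : ((univ : Finset (ChordDiagram n)).card : ℝ) = cnt (2*n) := by
  rw [← Mt_card (2*n) (univ : Finset (Fin (2*n))) (by simp)]
  norm_cast
  refine Finset.card_bij (fun C _ => toPermC C) ?_ ?_ ?_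
  · intro C _
    rw [mem_Mt]
    exact ⟨C.2.1, fun v => ⟨fun _ => mem_univ _, fun _ => C.2.2 v⟩⟩
  · intro C _ C' _ h
    apply Subtype.ext
    funext v
    exact congrArg (fun f : Equiv.Perm (Fin (2*n)) => f v) h
  · intro f hf
    rw [mem_Mt] at hf
    refine ⟨⟨f, hf.1, fun v => (hf.2 v).2 (mem_univ _)⟩, mem_univ _, ?_⟩
    ext v; rfl

lemma exists_pairs {V : Type*} (A : Finset V) (x : V) : ∃ (u v : ℕ → V) (κ : V → ℕ),
    ∀ i ∈ range (A.card / 2), u i ∈ A ∧ v i ∈ A ∧ u i ≠ v i ∧ κ (u i) = i ∧ κ (v i) = i := by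
  let e := A.equivFin
  refine ⟨fun i => if h : 2*i < A.card then (e.symm ⟨2*i, h⟩).1 else x,
    fun i => if h : 2*i+1 < A.card then (e.symm ⟨2*i+1, h⟩).1 else x,
    fun z => if h : z ∈ A then (e ⟨z, h⟩ : ℕ) / 2 else 0, ?_⟩
  intro i hi
  rw [mem_range] at hi
  have h1 : 2*i < A.card := by omega
  have h2 : 2*i+1 < A.card := by omega
  simp only [h1, h2, dif_pos, coe_mem, Subtype.coe_eta, Equiv.apply_symm_apply, true_and]
  refine ⟨?_, by omega, by omega⟩
  intro h
  have := e.symm.injective (Subtype.ext h)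
  simp at this

lemma pair_bound (x y : Fin (2*n)) (hxy : x ≠ y) (A B : Finset (Fin (2*n)))
    (hAB : Disjoint A B) (hU : A ∪ B = (univ.erase x).erase y) (hle : A.card ≤ B.card)
    (hX : ∀ a ∈ A, ∀ a' ∈ A, ∀ b ∈ B, ∀ b' ∈ B, a ≠ a' → b ≠ b' →
      cross4 a b a' b' ∨ cross4 a b' a' b)
    (hcr : ∀ a ∈ A, ∀ b ∈ B, Xor' (Between x y a) (Between x y b)) (m : ℕ) (hm : 4 * m ≤ A.card) :
    ∑ C ∈ (univ : Finset (ChordDiagram n)).filter (fun C => C.1 x = y),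
      ((univ.filter fun β : Fin (2*n) → Fin (2*n) → Bool => Alone (C, β) x).card : ℝ)
      ≤ (31/32)^m * cnt (2*n-2) * Fintype.card (Fin (2*n) → Fin (2*n) → Bool) := by
  obtain ⟨u, v, κ, huv⟩ := exists_pairs A x
  set J := range (A.card / 2) with hJ
  let X : Fin (2*n) → Fin (2*n) → Fin (2*n) → Fin (2*n) → Prop :=
    fun a a' b b' => cross4 a b a' b'
  have hdis : ∀ z, z ∈ A → z ∉ B := fun z h h' => (Finset.disjoint_left.1 hAB) h h'
  have hnx : ∀ z, z ∈ A → z ≠ x ∧ z ≠ y := by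
    intro z hz
    have : z ∈ A ∪ B := mem_union_left _ hz
    rw [hU] at this
    simp only [mem_erase] at this
    exact ⟨this.2.1, this.1⟩
  have hc : ((univ.erase x).erase y : Finset (Fin (2*n))).card = 2*n - 2 := by
    rw [card_erase_of_mem (by simp [hxy.symm]), card_erase_of_mem (mem_univ _)]
    simp; omega
  have hrec := main_rec X u v κ m A B J hAB hle (by simp [hJ]; omega) huv (by
    intro i hi b hb b' hb' hbb
    obtain ⟨a1, a2, a3, _⟩ := huv i hi
    exact hX _ a1 _ a2 b hb b' hb' a3 hbb)
  rw [hU, hc] at hrec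
  have hstep : ∀ C ∈ (univ : Finset (ChordDiagram n)).filter (fun C => C.1 x = y),
      ((univ.filter fun β : Fin (2*n) → Fin (2*n) → Bool => Alone (C, β) x).card : ℝ)
      ≤ (3/4)^(goodIdx J u v B X C.1).card * Fintype.card (Fin (2*n) → Fin (2*n) → Bool) := by
    intro C hC
    simp only [mem_filter, mem_univ, true_and] at hC
    have hrep : ∀ p ∈ A, ∀ q ∈ A, p ≠ q → C.1 p ∈ B → chordRep C p ≠ chordRep C q := by
      intro p hp q hq hpq hB e
      rcases rep_eq C p q e with h | h
      · exact hpq h.symm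
      · rw [h] at hq; exact hdis _ hq hB
    apply orient_bound
    · intro i hi
      simp only [goodIdx, mem_filter] at hi
      obtain ⟨a1, a2, a3, a4, a5⟩ := huv i hi.1
      refine ⟨?_, ?_, hi.2.2.2⟩
      · unfold Crosses; rw [hC]; exact hcr _ a1 _ hi.2.1
      · unfold Crosses; rw [hC]; exact hcr _ a2 _ hi.2.2.1
    · intro i hi j hj hij
      simp only [goodIdx, mem_filter] at hi hj
      obtain ⟨a1, a2, a3, a4, a5⟩ := huv i hi.1
      obtain ⟨b1, b2, b3, b4, b5⟩ := huv j hj.1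
      refine ⟨hrep _ a1 _ b1 ?_ hi.2.1, hrep _ a1 _ b2 ?_ hi.2.1, hrep _ a2 _ b2 ?_ hi.2.2.1⟩
      · intro e; rw [e, b4] at a4; exact hij a4.symm
      · intro e; rw [e, b5] at a4; exact hij a4.symm
      · intro e; rw [e, b5] at a5; exact hij a5.symm
  refine (sum_le_sum hstep).trans ?_
  rw [← sum_mul]
  apply mul_le_mul_of_nonneg_right _ (by positivity)
  rw [sum_diagrams x y (fun f => (3/4 : ℝ)^(goodIdx J u v B X f).card),
    Mt_fiber_sum (mem_univ x) (by simp [hxy.symm])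
      (fun f => (3/4 : ℝ)^(goodIdx J u v B X f).card)]
  refine le_trans ?_ hrec
  apply sum_le_sum
  intro g hg
  obtain ⟨d1, d2, d3⟩ := Mt_step_bwd (mem_univ x) (by simp [hxy.symm]) hg
  apply goodIdx_pow_le (Finset.Subset.refl _) (Finset.Subset.refl _)
  · intro i hi
    have := hnx _ (huv i hi).1
    exact d3 _ this.1 this.2
  · intro i hi
    have := hnx _ (huv i hi).2.1
    exact d3 _ this.1 this.2

/-- The length of the chord joining `x` and `y`. -/
def lenXY (x y : Fin (2*n)) : ℕ :=
  min (max (x:ℕ) (y : ℕ) - min (x:ℕ) (y : ℕ) - 1)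
      (2*n - (max (x:ℕ) (y : ℕ) - min (x:ℕ) (y : ℕ)) - 1)

lemma pair_bound' (x y : Fin (2*n)) (hxy : x ≠ y) :
    ∑ C ∈ (univ : Finset (ChordDiagram n)).filter (fun C => C.1 x = y),
      ((univ.filter fun β : Fin (2*n) → Fin (2*n) → Bool => Alone (C, β) x).card : ℝ)
      ≤ (31/32)^(lenXY x y / 4) * cnt (2*n-2) *
        Fintype.card (Fin (2*n) → Fin (2*n) → Bool) := by
  let A : Finset (Fin (2*n)) := univ.filter (fun z => Between x y z)
  let B : Finset (Fin (2*n)) := univ.filter (fun z => ¬ Between x y z ∧ z ≠ x ∧ z ≠ y)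
  have hA : A.card = max (x:ℕ) (y : ℕ) - min (x:ℕ) (y : ℕ) - 1 := by
    have : A = Ioo (min x y) (max x y) := by
      ext z; simp [A, Between]
    rw [this, Fin.card_Ioo]
    rcases le_total x y with h | h
    · have h' : (x:ℕ) ≤ y := h
      simp [h, h']
    · have h' : (y:ℕ) ≤ x := h
      simp [h, h']
  have hdisj : Disjoint A B := by
    rw [Finset.disjoint_left]; intro z; simp only [A, B, mem_filter, mem_univ, true_and]; tauto
  have hun : A ∪ B = (univ.erase x).erase y := by
    ext z
    have h1 : Between x y z → z ≠ x ∧ z ≠ y := by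
      intro h
      rw [between_iff] at h
      simp only [ne_eq, Fin.ext_iff]
      omega
    simp only [A, B, mem_union, mem_filter, mem_univ, true_and, mem_erase]
    tauto
  have hc : ((univ.erase x).erase y : Finset (Fin (2*n))).card = 2*n - 2 := by
    rw [card_erase_of_mem (by simp [hxy.symm]), card_erase_of_mem (mem_univ _)]
    simp; omega
  have hcAB : A.card + B.card = 2*n-2 := by
    rw [← card_union_of_disjoint hdisj, hun, hc]
  have hx := x.2
  have hy := y.2
  have hne : (x:ℕ) ≠ y := fun h => hxy (Fin.ext h)
  have hX : ∀ a ∈ A, ∀ a' ∈ A, ∀ b ∈ B, ∀ b' ∈ B, a ≠ a' → b ≠ b' →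
      (cross4 a b a' b' ∨ cross4 a b' a' b) ∧ (cross4 b a b' a' ∨ cross4 b a' b' a) := by
    intro a ha a' ha' b hb b' hb' h1 h2
    simp only [A, B, mem_filter, mem_univ, true_and] at ha ha' hb hb'
    exact cross4_or x y a a' b b' hxy h1 h2 ha ha' hb.1 hb'.1 hb.2.1 hb.2.2 hb'.2.1 hb'.2.2
  have hXor : ∀ a ∈ A, ∀ b ∈ B, Between x y a ∧ ¬ Between x y b := by
    intro a ha b hb
    simp only [A, B, mem_filter, mem_univ, true_and] at ha hb
    exact ⟨ha, hb.1⟩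
  rcases le_total A.card B.card with h | h
  · apply pair_bound x y hxy A B hdisj hun h
    · intro a ha a' ha' b hb b' hb' h1 h2
      exact (hX a ha a' ha' b hb b' hb' h1 h2).1
    · intro a ha b hb
      exact Or.inl (hXor a ha b hb)
    · unfold lenXY; omega
  · apply pair_bound x y hxy B A hdisj.symm (by rw [union_comm, hun]) h
    · intro a ha a' ha' b hb b' hb' h1 h2
      exact (hX b hb b' hb' a ha a' ha' h2 h1).2
    · intro a ha b hb
      exact Or.inr (hXor b hb a ha)
    · unfold lenXY; omega

lemma pow_len_le (l : ℕ) : (31/32 : ℝ)^(l/4) ≤ 2 * (127/128)^l := by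
  have h1 : (31/32 : ℝ) ≤ (127/128)^4 := by norm_num
  have h2 : (31/32 : ℝ)^(l/4) ≤ (127/128)^(4*(l/4)) := by
    rw [pow_mul]; exact pow_le_pow_left₀ (by norm_num) h1 _
  have h3 : l = 4*(l/4) + l%4 := by omega
  have h4 : (1:ℝ) ≤ 2 * (127/128)^(l%4) := by
    have : l % 4 < 4 := Nat.mod_lt _ (by norm_num)
    interval_cases l % 4 <;> norm_num
  calc (31/32 : ℝ)^(l/4) ≤ (127/128)^(4*(l/4)) := h2
    _ ≤ (127/128)^(4*(l/4)) * (2 * (127/128)^(l%4)) :=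
        le_mul_of_one_le_right (by positivity) h4
    _ = 2 * (127/128)^(4*(l/4) + l%4) := by rw [pow_add]; ring
    _ = _ := by rw [← h3]

lemma sum_len (x : Fin (2*n)) (w : ℕ) :
    ∑ y ∈ (univ.erase x).filter (fun y => w ≤ lenXY x y), (31/32 : ℝ)^(lenXY x y / 4)
      ≤ 1024 * (127/128)^w := by
  have hfib : ∀ l, (((univ.erase x).filter (fun y => w ≤ lenXY x y)).filter
      (fun y => lenXY x y = l)).card ≤ 4 := by
    intro l
    have : (((univ.erase x).filter (fun y => w ≤ lenXY x y)).filter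
      (fun y => lenXY x y = l)).card ≤
        ({(x:ℤ) + (l+1), (x:ℤ) - (l+1), (x:ℤ) + (2*n-l-1), (x:ℤ) - (2*n-l-1)} : Finset ℤ).card := by
      apply Finset.card_le_card_of_injOn (fun y : Fin (2*n) => ((y:ℕ):ℤ))
      · intro y hy
        rw [mem_coe, mem_filter, mem_filter, mem_erase] at hy
        simp only [ne_eq, Fin.ext_iff, lenXY] at hy
        simp only [coe_insert, coe_singleton, Set.mem_insert_iff, Set.mem_singleton_iff]
        have := x.2
        have := y.2
        omega
      · intro y _ y' _ h
        apply Fin.ext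
        simpa using h
    exact this.trans Finset.card_le_four
  have hmaps : ∀ y ∈ (univ.erase x).filter (fun y => w ≤ lenXY x y),
      lenXY x y ∈ Ico w (w + 2*n) := by
    intro y hy
    simp only [mem_filter] at hy
    have : lenXY x y < 2*n := by
      have := x.2
      unfold lenXY; omega
    rw [mem_Ico]; omega
  rw [← Finset.sum_fiberwise_of_maps_to hmaps]
  calc _ ≤ ∑ l ∈ Ico w (w+2*n), 4 * (2 * (127/128 : ℝ)^l) := by
        apply sum_le_sum
        intro l _
        rw [sum_congr rfl (g := fun _ => (31/32 : ℝ)^(l/4))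
          (fun y hy => by rw [(mem_filter.1 hy).2]), sum_const, nsmul_eq_mul]
        apply mul_le_mul _ (pow_len_le l) (by positivity) (by norm_num)
        exact_mod_cast hfib l
    _ = 8 * (127/128)^w * ∑ i ∈ range (2*n), (127/128 : ℝ)^i := by
        rw [Finset.sum_Ico_eq_sum_range, mul_sum]
        simp only [add_tsub_cancel_left]
        apply sum_congr rfl
        intro i _; rw [pow_add]; ring
    _ ≤ 8 * (127/128)^w * 128 := by
        apply mul_le_mul_of_nonneg_left _ (by positivity)
        rw [geom_sum_eq (by norm_num)]
        have : (0:ℝ) ≤ (127/128)^(2*n) := by positivity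
        rw [div_le_iff_of_neg (by norm_num)]
        norm_num
    _ = _ := by ring

lemma bad_bound (hn : 0 < n) (w : ℕ) :
    ((univ.filter fun D : OrientedChordDiagram n =>
      ∃ x : Fin (2*n), w ≤ chordLength D.1 x ∧ Alone D x).card : ℝ)
      ≤ 2048 * (127/128)^w * (univ : Finset (OrientedChordDiagram n)).card := by
  set Nb := (Fintype.card (Fin (2*n) → Fin (2*n) → Bool) : ℝ) with hNb
  have hpair : ∀ x y : Fin (2*n), x ≠ y →
      ((univ.filter fun D : OrientedChordDiagram n => D.1.1 x = y ∧ Alone D x).card : ℝ)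
      ≤ (31/32)^(lenXY x y / 4) * cnt (2*n-2) * Nb := by
    intro x y hxy
    refine le_trans (le_of_eq ?_) (pair_bound' x y hxy)
    rw [Finset.card_filter, ← univ_product_univ, sum_product, sum_filter]
    push_cast
    apply sum_congr rfl
    intro C _
    split_ifs with h
    · simp [h]
    · simp [h]
  have hsub : (univ.filter fun D : OrientedChordDiagram n =>
      ∃ x : Fin (2*n), w ≤ chordLength D.1 x ∧ Alone D x) ⊆
      (univ : Finset (Fin (2*n))).biUnion (fun x =>
        ((univ.erase x).filter (fun y => w ≤ lenXY x y)).biUnion (fun y =>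
          univ.filter fun D : OrientedChordDiagram n => D.1.1 x = y ∧ Alone D x)) := by
    intro D hD
    simp only [mem_filter, mem_univ, true_and] at hD
    obtain ⟨x, h1, h2⟩ := hD
    simp only [mem_biUnion, mem_filter, mem_univ, true_and, mem_erase]
    exact ⟨x, D.1.1 x, ⟨⟨D.1.2.2 x, trivial⟩, h1⟩, rfl, h2⟩
  have hcnt := cnt_nonneg (2*n-2)
  have hNb0 : 0 ≤ Nb := by positivity
  have htot : ((univ : Finset (OrientedChordDiagram n)).card : ℝ) = (2*n-1) * cnt (2*n-2) * Nb := by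
    rw [← univ_product_univ, card_product, Nat.cast_mul, card_diagrams]
    obtain ⟨k, rfl⟩ : ∃ k, n = k+1 := ⟨n-1, by omega⟩
    rw [show 2*(k+1) = 2*k+2 by ring, cnt]
    simp only [hNb, Finset.card_univ, Nat.add_sub_cancel]
    push_cast
    ring_nf
  calc _ ≤ ∑ x : Fin (2*n), ∑ y ∈ (univ.erase x).filter (fun y => w ≤ lenXY x y),
        ((univ.filter fun D : OrientedChordDiagram n => D.1.1 x = y ∧ Alone D x).card : ℝ) := by
        have := (card_le_card hsub).trans (card_biUnion_le.trans
          (sum_le_sum (fun x _ => card_biUnion_le)))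
        exact_mod_cast this
    _ ≤ ∑ x : Fin (2*n), ∑ y ∈ (univ.erase x).filter (fun y => w ≤ lenXY x y),
        (31/32)^(lenXY x y / 4) * cnt (2*n-2) * Nb := by
        apply sum_le_sum; intro x _
        apply sum_le_sum; intro y hy
        exact hpair x y (by simp only [mem_filter, mem_erase] at hy; exact hy.1.1.symm)
    _ ≤ ∑ x : Fin (2*n), (1024 * (127/128)^w) * cnt (2*n-2) * Nb := by
        apply sum_le_sum; intro x _
        rw [← sum_mul, ← sum_mul]
        gcongr
        exact sum_len x w
    _ = (2*n) * ((1024 * (127/128)^w) * cnt (2*n-2) * Nb) := by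
        simp
    _ ≤ _ := by
        rw [htot]
        have h1 : (1:ℝ) ≤ n := by exact_mod_cast hn
        have h2 : (2*n : ℝ) ≤ 2 * (2*n-1) := by linarith
        have h3 : (0:ℝ) ≤ (1024 * (127/128)^w) * cnt (2*n-2) * Nb := by positivity
        have := mul_le_mul_of_nonneg_right h2 h3
        linarith

end Assemble

theorem stmt16 (ω : ℕ → ℕ) (hω : Filter.Tendsto ω Filter.atTop Filter.atTop) :
    Filter.Tendsto
      (fun n : ℕ => probD n (fun D =>
        ¬ ∃ x : Fin (2*n), ω n ≤ chordLength D.1 x ∧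
          ∀ u : Fin (2*n), u ≠ x → u ≠ D.1.1 x → ¬ MutualReach D x u))
      Filter.atTop (nhds 1) := by
  have hpow : Filter.Tendsto (fun n => 1 - 2048 * (127/128 : ℝ)^(ω n)) Filter.atTop (nhds 1) := by
    have h1 := (tendsto_pow_atTop_nhds_zero_of_lt_one (r := (127/128 : ℝ)) (by norm_num)
      (by norm_num)).comp hω
    have h2 := (h1.const_mul 2048).const_sub 1
    simpa using h2
  refine tendsto_of_tendsto_of_tendsto_of_le_of_le' hpow tendsto_const_nhds ?_ ?_
  · filter_upwards [eventually_gt_atTop 0] with n hn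
    have hb := bad_bound hn (ω n)
    have hN : (0:ℝ) < (univ : Finset (OrientedChordDiagram n)).card := by
      rw [← univ_product_univ, card_product, Nat.cast_mul, card_diagrams]
      apply mul_pos (cnt_even_pos n)
      rw [Finset.card_univ]
      exact_mod_cast Fintype.card_pos
    have hadd := Finset.card_filter_add_card_filter_not
      (s := (univ : Finset (OrientedChordDiagram n)))
      (fun D => ∃ x : Fin (2*n), ω n ≤ chordLength D.1 x ∧ Alone D x)
    have hadd' : ((univ.filter fun D : OrientedChordDiagram n =>
        ∃ x : Fin (2*n), ω n ≤ chordLength D.1 x ∧ Alone D x).card : ℝ) +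
        ((univ.filter fun D : OrientedChordDiagram n =>
        ¬ ∃ x : Fin (2*n), ω n ≤ chordLength D.1 x ∧ Alone D x).card : ℝ) =
        (univ : Finset (OrientedChordDiagram n)).card := by exact_mod_cast hadd
    unfold probD
    rw [le_div_iff₀ hN]
    have hle : ((univ.filter fun D : OrientedChordDiagram n =>
        ¬ ∃ x : Fin (2*n), ω n ≤ chordLength D.1 x ∧ Alone D x).card : ℝ) ≤
        (univ.filter fun D : OrientedChordDiagram n =>
        ¬ ∃ x : Fin (2*n), ω n ≤ chordLength D.1 x ∧
          ∀ u : Fin (2*n), u ≠ x → u ≠ D.1.1 x → ¬ MutualReach D x u).card := by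
      rw [Nat.cast_le]
      apply card_le_card
      intro D hD
      rw [mem_filter] at hD ⊢
      exact hD
    refine le_trans ?_ (le_trans hle (le_of_eq ?_))
    · linarith
    · congr!
  · refine Eventually.of_forall (fun n => ?_)
    unfold probD
    apply div_le_one_of_le₀ _ (by positivity)
    exact_mod_cast card_le_card (filter_subset _ _)
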